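/- arXiv:1509.01492 — 2 statements merged into one kernel-verified Lean document; each statement's English description precedes it below -/
import Mathlib

section
/- There exists a unique ℂ-algebra antihomomorphism κ : Ã → Ã (i.e., a ℂ-linear unital map with κ(ab) = κ(b)κ(a) for all a, b; equivalently, an algebra homomorphism into the opposite algebra) satisfying κ(x) = x⁻¹, κ(x⁻¹) = x, κ(y) = −x⁻¹y, and κ(θ) = −qθ. -/
/-!
`Ã`: the extended algebra of functions on the Z₃-graded quantum superspace,
the unital associative ℂ-algebra with generators `x`, `x⁻¹`, `y`, `θ`,
quotient of the free algebra by the two-sided ideal generated by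
`x·x⁻¹ − 1`, `x⁻¹·x − 1`, `xy − q·yx`, `xθ − q·θx`, `yθ − q²·θy`, `y³`, `θ³`.
-/

noncomputable section

inductive Gen : Type
  | x | xinv | y | th

abbrev FA : Type := FreeAlgebra ℂ Gen

def Xf : FA := FreeAlgebra.ι ℂ Gen.x
def XIf : FA := FreeAlgebra.ι ℂ Gen.xinv
def Yf : FA := FreeAlgebra.ι ℂ Gen.y
def Tf : FA := FreeAlgebra.ι ℂ Gen.th

/-- The defining relations of `Ã`. -/
inductive QRel (q : ℂ) : FA → FA → Prop
  | xxi : QRel q (Xf * XIf) 1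
  | xix : QRel q (XIf * Xf) 1
  | xy : QRel q (Xf * Yf) (q • (Yf * Xf))
  | xth : QRel q (Xf * Tf) (q • (Tf * Xf))
  | yth : QRel q (Yf * Tf) ((q ^ 2) • (Tf * Yf))
  | ycube : QRel q (Yf ^ 3) 0
  | thcube : QRel q (Tf ^ 3) 0

/-- The extended algebra `Ã` of functions on the Z₃-graded quantum superspace. -/
abbrev Atl (q : ℂ) : Type := RingQuot (QRel q)

def Xg (q : ℂ) : Atl q := RingQuot.mkAlgHom ℂ (QRel q) Xf
def XIg (q : ℂ) : Atl q := RingQuot.mkAlgHom ℂ (QRel q) XIf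
def Yg (q : ℂ) : Atl q := RingQuot.mkAlgHom ℂ (QRel q) Yf
def Tg (q : ℂ) : Atl q := RingQuot.mkAlgHom ℂ (QRel q) Tf

/-!
By its presentation, an algebra map out of `Ã` is a quadruple satisfying the defining relations, so
it suffices that `x⁻¹, x, −x⁻¹y, −qθ` satisfy them in the opposite algebra. Moving `x⁻¹` to the left
past `y` or `θ` costs a factor `q`. Hence `(x⁻¹y)³` is a multiple of `x⁻³y³ = 0`, and the relation
between `y` and `θ` becomes `q² x⁻¹θy = q⁵ x⁻¹θy`, an identity because `q³ = 1`.
-/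

section SkewCommutation

variable {R A : Type*} [CommSemiring R] [Semiring A] [Algebra R A] {r : R} {a b : A}

theorem mul_pow_of_mul_eq_smul (h : b * a = r • (a * b)) (n : ℕ) :
    (a * b) ^ n = r ^ n.choose 2 • (a ^ n * b ^ n) := by
  have hba : SemiconjBy b a (r • a) := h.trans (smul_mul_assoc r a b).symm
  induction n with
  | zero => simp
  | succ n ih =>
    have hpow : b * a ^ n = r ^ n • (a ^ n * b) := by
      simpa only [smul_pow, smul_mul_assoc] using (hba.pow_right n).eq
    calc (a * b) ^ (n + 1)
        = r ^ n.choose 2 • (a * (b * a ^ n) * b ^ n) := by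
          rw [pow_succ', ih, mul_smul_comm]
          simp only [mul_assoc]
      _ = r ^ (n + 1).choose 2 • (a ^ (n + 1) * b ^ (n + 1)) := by
          rw [hpow, Nat.choose_succ_succ' n 1, Nat.choose_one_right, add_comm n, pow_add,
            pow_succ' a, pow_succ' b]
          simp only [mul_smul_comm, smul_mul_assoc, smul_smul, mul_assoc]

theorem mul_inv_eq_smul_of_mul_eq_smul {a' : A} (ha : a * a' = 1) (ha' : a' * a = 1)
    (h : a * b = r • (b * a)) : b * a' = r • (a' * b) := by
  let u : Aˣ := ⟨a, a', ha, ha'⟩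
  have hu : SemiconjBy (u : A) b (r • b) := h.trans (smul_mul_assoc r b a).symm
  rw [← mul_smul_comm]
  exact hu.units_inv_symm_left.eq.symm

end SkewCommutation

/-- A point of the `ℤ₃`-graded quantum superspace with values in an algebra `A`: a quadruple
`(x, x', y, θ)`, with `x'` playing the role of `x⁻¹`, satisfying the defining relations of `Ã`.
It encodes an algebra homomorphism `Ã → A` by the images of the generators. -/
structure IsSuperspacePoint {R A : Type*} [CommSemiring R] [Semiring A] [Algebra R A]
    (q : R) (x x' y θ : A) : Prop where
  x_mul_inv : x * x' = 1
  inv_mul_x : x' * x = 1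
  x_mul_y : x * y = q • (y * x)
  x_mul_θ : x * θ = q • (θ * x)
  y_mul_θ : y * θ = q ^ 2 • (θ * y)
  y_pow_three : y ^ 3 = 0
  θ_pow_three : θ ^ 3 = 0

theorem isSuperspacePoint_generators (q : ℂ) :
    IsSuperspacePoint q (Xg q) (XIg q) (Yg q) (Tg q) where
  x_mul_inv := by simpa [Xg, XIg] using RingQuot.mkAlgHom_rel ℂ (QRel.xxi (q := q))
  inv_mul_x := by simpa [Xg, XIg] using RingQuot.mkAlgHom_rel ℂ (QRel.xix (q := q))
  x_mul_y := by simpa [Xg, Yg] using RingQuot.mkAlgHom_rel ℂ (QRel.xy (q := q))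
  x_mul_θ := by simpa [Xg, Tg] using RingQuot.mkAlgHom_rel ℂ (QRel.xth (q := q))
  y_mul_θ := by simpa [Yg, Tg] using RingQuot.mkAlgHom_rel ℂ (QRel.yth (q := q))
  y_pow_three := by simpa [Yg] using RingQuot.mkAlgHom_rel ℂ (QRel.ycube (q := q))
  θ_pow_three := by simpa [Tg] using RingQuot.mkAlgHom_rel ℂ (QRel.thcube (q := q))

theorem Atl.algHom_ext {q : ℂ} {A : Type*} [Semiring A] [Algebra ℂ A] {f g : Atl q →ₐ[ℂ] A}
    (hx : f (Xg q) = g (Xg q)) (hx' : f (XIg q) = g (XIg q)) (hy : f (Yg q) = g (Yg q))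
    (hθ : f (Tg q) = g (Tg q)) : f = g := by
  refine RingQuot.ringQuot_ext' _ _ _ (FreeAlgebra.hom_ext (funext fun i => ?_))
  cases i with
  | x => exact hx
  | xinv => exact hx'
  | y => exact hy
  | th => exact hθ

namespace IsSuperspacePoint

section UniversalProperty

variable {q : ℂ} {A : Type*} [Semiring A] [Algebra ℂ A] {x x' y θ : A}

/-- The algebra homomorphism `Ã → A` sending the generators to a given point. -/
def lift (h : IsSuperspacePoint q x x' y θ) : Atl q →ₐ[ℂ] A :=
  RingQuot.liftAlgHom ℂ ⟨FreeAlgebra.lift ℂ (Gen.rec x x' y θ), fun a b hab => by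
    cases hab with
    | xxi => simpa [Xf, XIf] using h.x_mul_inv
    | xix => simpa [Xf, XIf] using h.inv_mul_x
    | xy => simpa [Xf, Yf] using h.x_mul_y
    | xth => simpa [Xf, Tf] using h.x_mul_θ
    | yth => simpa [Yf, Tf] using h.y_mul_θ
    | ycube => simpa [Yf] using h.y_pow_three
    | thcube => simpa [Tf] using h.θ_pow_three⟩

theorem lift_Xg (h : IsSuperspacePoint q x x' y θ) : h.lift (Xg q) = x := by
  simp [lift, Xg, Xf]

theorem lift_XIg (h : IsSuperspacePoint q x x' y θ) : h.lift (XIg q) = x' := by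
  simp [lift, XIg, XIf]

theorem lift_Yg (h : IsSuperspacePoint q x x' y θ) : h.lift (Yg q) = y := by
  simp [lift, Yg, Yf]

theorem lift_Tg (h : IsSuperspacePoint q x x' y θ) : h.lift (Tg q) = θ := by
  simp [lift, Tg, Tf]

theorem existsUnique_algHom (h : IsSuperspacePoint q x x' y θ) :
    ∃! f : Atl q →ₐ[ℂ] A, f (Xg q) = x ∧ f (XIg q) = x' ∧ f (Yg q) = y ∧ f (Tg q) = θ := by
  refine ⟨h.lift, ⟨h.lift_Xg, h.lift_XIg, h.lift_Yg, h.lift_Tg⟩, ?_⟩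
  rintro f ⟨hx, hx', hy, hθ⟩
  exact Atl.algHom_ext (hx.trans h.lift_Xg.symm) (hx'.trans h.lift_XIg.symm)
    (hy.trans h.lift_Yg.symm) (hθ.trans h.lift_Tg.symm)

end UniversalProperty

section Coinverse

variable {R A : Type*} [CommSemiring R] [Semiring A] [Algebra R A] {q : R} {x x' y θ : A}

theorem y_mul_inv (h : IsSuperspacePoint q x x' y θ) : y * x' = q • (x' * y) :=
  mul_inv_eq_smul_of_mul_eq_smul h.x_mul_inv h.inv_mul_x h.x_mul_y

theorem θ_mul_inv (h : IsSuperspacePoint q x x' y θ) : θ * x' = q • (x' * θ) :=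
  mul_inv_eq_smul_of_mul_eq_smul h.x_mul_inv h.inv_mul_x h.x_mul_θ

theorem inv_mul_y_pow_three (h : IsSuperspacePoint q x x' y θ) : (x' * y) ^ 3 = 0 := by
  rw [mul_pow_of_mul_eq_smul h.y_mul_inv, h.y_pow_three, mul_zero, smul_zero]

theorem smul_θ_mul_inv_mul_y (h : IsSuperspacePoint q x x' y θ) (hq : q ^ 3 = 1) :
    (q • θ) * (x' * y) = q ^ 2 • (x' * y * (q • θ)) :=
  calc (q • θ) * (x' * y) = q ^ 2 • (x' * (θ * y)) := by
        rw [← mul_assoc, smul_mul_assoc, h.θ_mul_inv, smul_smul, ← pow_two, smul_mul_assoc,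
          mul_assoc]
    _ = (q ^ 3 * q ^ 2) • (x' * (θ * y)) := by rw [hq, one_mul]
    _ = q ^ 2 • (x' * y * (q • θ)) := by
        rw [mul_assoc, mul_smul_comm, h.y_mul_θ, mul_smul_comm, mul_smul_comm, smul_smul,
          smul_smul, ← pow_succ]

open MulOpposite in
theorem coinverse {A : Type*} [Ring A] [Algebra R A] {x x' y θ : A}
    (h : IsSuperspacePoint q x x' y θ) (hq : q ^ 3 = 1) :
    IsSuperspacePoint q (op x') (op x) (op (-(x' * y))) (op (-(q • θ))) where
  x_mul_inv := by rw [← op_mul, h.x_mul_inv, op_one]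
  inv_mul_x := by rw [← op_mul, h.inv_mul_x, op_one]
  x_mul_y := by
    rw [← op_mul, ← op_mul, ← op_smul, neg_mul, mul_neg, mul_assoc, h.y_mul_inv, mul_smul_comm,
      smul_neg]
  x_mul_θ := by
    rw [← op_mul, ← op_mul, ← op_smul, neg_mul, mul_neg, smul_mul_assoc, h.θ_mul_inv,
      mul_smul_comm, smul_neg]
  y_mul_θ := by
    rw [← op_mul, ← op_mul, ← op_smul, neg_mul_neg, neg_mul_neg, h.smul_θ_mul_inv_mul_y hq]
  y_pow_three := by
    rw [← op_pow, Odd.neg_pow (by decide), h.inv_mul_y_pow_three, neg_zero, op_zero]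
  θ_pow_three := by
    rw [← op_pow, Odd.neg_pow (by decide), smul_pow, h.θ_pow_three, smul_zero, neg_zero, op_zero]

end Coinverse

end IsSuperspacePoint

open MulOpposite in
/-- There is a unique ℂ-algebra antihomomorphism `κ : Ã → Ã` (formalized as a
ℂ-algebra homomorphism into the opposite algebra) with `κ(x) = x⁻¹`, `κ(x⁻¹) = x`,
`κ(y) = −x⁻¹y`, `κ(θ) = −qθ`. -/
theorem coinverse_exists_unique (q : ℂ) (hq3 : q ^ 3 = 1) (hq1 : q ≠ 1) :
    ∃! κ : Atl q →ₐ[ℂ] (Atl q)ᵐᵒᵖ,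
      κ (Xg q) = op (XIg q) ∧
      κ (XIg q) = op (Xg q) ∧
      κ (Yg q) = op (-(XIg q * Yg q)) ∧
      κ (Tg q) = op (-(q • Tg q)) :=
  ((isSuperspacePoint_generators q).coinverse hq3).existsUnique_algHom
end
end

section
/- The coproduct Δ (given on generators by Δ(x) = x⊗x, Δ(y) = y⊗1 + x⊗y, Δ(θ) = θ⊗x + x⁻¹⊗θ) respects the defining relations of Ã in the Z₃-graded (braided) tensor product; concretely, the following three identities hold in the ℂ-module Ã ⊗ Ã (ordinary tensor product of ℂ-modules, with the braiding phases written out explicitly): (i) xy⊗x + x²⊗xy = q(yx⊗x) + q(x²⊗yx); (ii) xθ⊗x² + 1⊗xθ = q(θx⊗x²) + q(1⊗θx); (iii) yθ⊗x + yx⁻¹⊗θ + q²(xθ⊗yx) + 1⊗yθ = q²(θy⊗x) + q²(θx⊗xy) + q(x⁻¹y⊗θ) + q²(1⊗θy). -/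
/-!
`Ã`: the extended algebra of functions on the Z₃-graded quantum superspace,
the unital associative ℂ-algebra with generators `x`, `x⁻¹`, `y`, `θ`,
quotient of the free algebra by the two-sided ideal generated by
`x·x⁻¹ − 1`, `x⁻¹·x − 1`, `xy − q·yx`, `xθ − q·θx`, `yθ − q²·θy`, `y³`, `θ³`.
-/

noncomputable section

open scoped TensorProduct

/-!
The identities hold term by term: each summand on the left is moved to a summand on the right by one
`q`-commutation inside a tensor factor. Two summands of `Δ(y)Δ(θ)` are less immediate. For
`yx⁻¹ ⊗ θ`, conjugating `xy = q yx` by `x⁻¹` gives `yx⁻¹ = q x⁻¹y`. For `xθ ⊗ yx`, the factor `q`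
produced by `xθ = q θx` on the left is absorbed by `q yx = xy` on the right.
-/

/-- The elements `a` and `b` `q`-commute: `ab = q ba`, with the scalar on `ba`. This is the
form of the defining relations of `Ã` between `x`, `y` and `θ`. -/
def QCommute {R A : Type*} [SMul R A] [Mul A] (q : R) (a b : A) : Prop :=
  a * b = q • (b * a)

namespace QCommute

theorem units_inv_right {R A : Type*} [Monoid A] [SMul R A] [IsScalarTower R A A]
    [SMulCommClass R A A] {q : R} {u : Aˣ} {b : A} (h : QCommute q (u : A) b) :
    QCommute q b (↑u⁻¹ : A) := by
  have hu : SemiconjBy (u : A) b (q • b) := h.trans (smul_mul_assoc q b (u : A)).symm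
  calc b * ↑u⁻¹ = ↑u⁻¹ * q • b := hu.units_inv_symm_left.eq.symm
    _ = q • (↑u⁻¹ * b) := mul_smul_comm q _ b

theorem mkAlgHom_of_rel {R A : Type*} [CommSemiring R] [Semiring A] [Algebra R A]
    {r : A → A → Prop} {q : R} {a b : A} (h : r (a * b) (q • (b * a))) :
    QCommute q (RingQuot.mkAlgHom R r a) (RingQuot.mkAlgHom R r b) := by
  simpa only [QCommute, map_mul, map_smul] using RingQuot.mkAlgHom_rel R h

section Tensor

variable {R A B M : Type*} [CommSemiring R] [NonUnitalNonAssocSemiring A] [Module R A]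
  [NonUnitalNonAssocSemiring B] [Module R B] [AddCommMonoid M] [Module R M]
  {q : R} {a b : A} {c d : B}

theorem mul_tmul (h : QCommute q a b) (m : M) :
    (a * b) ⊗ₜ[R] m = q • ((b * a) ⊗ₜ[R] m) := by
  rw [h, TensorProduct.smul_tmul']

theorem tmul_mul (h : QCommute q a b) (m : M) :
    m ⊗ₜ[R] (a * b) = q • (m ⊗ₜ[R] (b * a)) := by
  rw [h, TensorProduct.tmul_smul]

theorem mul_tmul_mul_swap (hab : QCommute q a b) (hcd : QCommute q c d) :
    (a * b) ⊗ₜ[R] (d * c) = (b * a) ⊗ₜ[R] (c * d) := by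
  rw [hab.mul_tmul, hcd.tmul_mul]

end Tensor

end QCommute

theorem coproduct_respects_relations_general {R A : Type*} [CommSemiring R] [Semiring A]
    [Algebra R A] {q : R} {x : Aˣ} {y θ : A} (hxy : QCommute q (x : A) y)
    (hxθ : QCommute q (x : A) θ) (hyθ : QCommute (q ^ 2) y θ) :
    ((x * y) ⊗ₜ[R] (x : A) + (x * x : A) ⊗ₜ[R] (x * y)
        = q • ((y * x) ⊗ₜ[R] (x : A)) + q • ((x * x : A) ⊗ₜ[R] (y * x))) ∧
    ((x * θ) ⊗ₜ[R] (x * x : A) + (1 : A) ⊗ₜ[R] (x * θ)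
        = q • ((θ * x) ⊗ₜ[R] (x * x : A)) + q • ((1 : A) ⊗ₜ[R] (θ * x))) ∧
    ((y * θ) ⊗ₜ[R] (x : A) + (y * ↑x⁻¹) ⊗ₜ[R] θ
        + (q ^ 2) • ((x * θ) ⊗ₜ[R] (y * x)) + (1 : A) ⊗ₜ[R] (y * θ)
        = (q ^ 2) • ((θ * y) ⊗ₜ[R] (x : A)) + (q ^ 2) • ((θ * x) ⊗ₜ[R] (x * y))
          + q • ((↑x⁻¹ * y) ⊗ₜ[R] θ) + (q ^ 2) • ((1 : A) ⊗ₜ[R] (θ * y))) := by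
  refine ⟨?_, ?_, ?_⟩
  · rw [hxy.mul_tmul, hxy.tmul_mul]
  · rw [hxθ.mul_tmul, hxθ.tmul_mul]
  · rw [hyθ.mul_tmul, hxy.units_inv_right.mul_tmul, hxθ.mul_tmul_mul_swap hxy, hyθ.tmul_mul,
      add_right_comm (_ • _)]

/-- The generator `x` of `Ã` as a unit, with inverse the generator `x⁻¹`. -/
def xgUnit (q : ℂ) : (Atl q)ˣ where
  val := Xg q
  inv := XIg q
  val_inv := by
    simpa only [Xg, XIg, map_mul, map_one] using RingQuot.mkAlgHom_rel ℂ (QRel.xxi (q := q))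
  inv_val := by
    simpa only [Xg, XIg, map_mul, map_one] using RingQuot.mkAlgHom_rel ℂ (QRel.xix (q := q))

theorem qCommute_Xg_Yg (q : ℂ) : QCommute q (Xg q) (Yg q) :=
  .mkAlgHom_of_rel .xy

theorem qCommute_Xg_Tg (q : ℂ) : QCommute q (Xg q) (Tg q) :=
  .mkAlgHom_of_rel .xth

theorem qCommute_Yg_Tg (q : ℂ) : QCommute (q ^ 2) (Yg q) (Tg q) :=
  .mkAlgHom_of_rel .yth

/-- The coproduct `Δ(x) = x⊗x`, `Δ(y) = y⊗1 + x⊗y`, `Δ(θ) = θ⊗x + x⁻¹⊗θ`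
respects the defining relations of `Ã` in the Z₃-graded tensor product: the
identities `Δ(x)Δ(y) = qΔ(y)Δ(x)`, `Δ(x)Δ(θ) = qΔ(θ)Δ(x)`,
`Δ(y)Δ(θ) = q²Δ(θ)Δ(y)` hold in `Ã ⊗[ℂ] Ã`, with all braiding phases written
out explicitly. -/
theorem coproduct_respects_relations (q : ℂ) (hq3 : q ^ 3 = 1) (hq1 : q ≠ 1) :
    ((Xg q * Yg q) ⊗ₜ[ℂ] Xg q + (Xg q * Xg q) ⊗ₜ[ℂ] (Xg q * Yg q)
        = q • ((Yg q * Xg q) ⊗ₜ[ℂ] Xg q) + q • ((Xg q * Xg q) ⊗ₜ[ℂ] (Yg q * Xg q))) ∧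
    ((Xg q * Tg q) ⊗ₜ[ℂ] (Xg q * Xg q) + (1 : Atl q) ⊗ₜ[ℂ] (Xg q * Tg q)
        = q • ((Tg q * Xg q) ⊗ₜ[ℂ] (Xg q * Xg q)) + q • ((1 : Atl q) ⊗ₜ[ℂ] (Tg q * Xg q))) ∧
    ((Yg q * Tg q) ⊗ₜ[ℂ] Xg q + (Yg q * XIg q) ⊗ₜ[ℂ] Tg q
        + (q ^ 2) • ((Xg q * Tg q) ⊗ₜ[ℂ] (Yg q * Xg q)) + (1 : Atl q) ⊗ₜ[ℂ] (Yg q * Tg q)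
        = (q ^ 2) • ((Tg q * Yg q) ⊗ₜ[ℂ] Xg q) + (q ^ 2) • ((Tg q * Xg q) ⊗ₜ[ℂ] (Xg q * Yg q))
          + q • ((XIg q * Yg q) ⊗ₜ[ℂ] Tg q) + (q ^ 2) • ((1 : Atl q) ⊗ₜ[ℂ] (Tg q * Yg q))) :=
  coproduct_respects_relations_general (x := xgUnit q) (qCommute_Xg_Yg q) (qCommute_Xg_Tg q)
    (qCommute_Yg_Tg q)
end
end
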